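/- Let Z = A(x,y) ∂_x + B(x,y) ∂_y be an analytic vector field near the origin of R^2 with A = x^α y^β Ã and B = x^α y^β B̃ for natural numbers α, β and analytic functions Ã, B̃. Suppose ∂_x A + ∂_y B = f·A + g·B for smooth functions f, g. Then α·Ã/x + β·B̃/y extends to an analytic function; in particular, if α ≠ 0 then x divides Ã, and if β ≠ 0 then y divides B̃ (i.e., the vector field (Ã, B̃) is tangent to the set {x^α y^β = 0}). -/

import Mathlib

/-!
On a hyperplane `l = 0` away from the remaining factors of the monomial, the field has the form
`lⁿ • W` with `n ≥ 1`, and the product rule gives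
`div (lⁿ • W) = n * lⁿ⁻¹ * l(W) + lⁿ * div W`. If this is `o(lⁿ⁻¹)`, then dividing by `lⁿ⁻¹` and
letting `l → 0` leaves `l(W) = 0`. By continuity the component `l(V)` of the reduced field vanishes
on the whole hyperplane, and an analytic function vanishing on a hyperplane is divisible by its
equation: telescoping each homogeneous term of the power series between a point and its projection
to the hyperplane exhibits the quotient as a convergent power series.
-/

open Asymptotics Filter Topology

section Division

variable {𝕜 E G : Type*} [NontriviallyNormedField 𝕜]
  [NormedAddCommGroup E] [NormedSpace 𝕜 E] [NormedAddCommGroup G] [NormedSpace 𝕜 G]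

/-- The projection `z ↦ z - l z • e`. It maps onto `ker l` along `e` when `l e = 1`, which is not
required by the definition. -/
noncomputable def projKerAlong (l : E →L[𝕜] 𝕜) (e : E) : E →L[𝕜] E :=
  .id 𝕜 E - l.smulRight e

theorem projKerAlong_apply (l : E →L[𝕜] 𝕜) (e z : E) : projKerAlong l e z = z - l z • e := rfl

theorem apply_projKerAlong {l : E →L[𝕜] 𝕜} {e : E} (he : l e = 1) (z : E) :
    l (projKerAlong l e z) = 0 := by
  simp [projKerAlong_apply, he]

/-- The power series `q` of the quotient by `l` of the function `z ↦ p(z) - p(π z)`, where `π` is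
the projection along `e`. Its degree-`n` term is
`q n (v₀, …, vₙ₋₁) = ∑ k, p (n + 1) (v₀, …, vₖ₋₁, e, π vₖ, …, π vₙ₋₁)`, so that
`l z • q n (z, …, z)` telescopes, the arguments `z` being turned into `π z` one at a time. -/
noncomputable def divSeries (l : E →L[𝕜] 𝕜) (e : E) (p : FormalMultilinearSeries 𝕜 E G) :
    FormalMultilinearSeries 𝕜 E G := fun n =>
  ∑ k : Fin (n + 1), ((p (n + 1)).curryMid k e).compContinuousLinearMap
    fun i => if k.succAbove i < k then .id 𝕜 E else projKerAlong l e

theorem smul_divSeries_apply (l : E →L[𝕜] 𝕜) (e : E) (p : FormalMultilinearSeries 𝕜 E G)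
    (n : ℕ) (z : E) :
    l z • divSeries l e p n (fun _ => z) =
      p (n + 1) (fun _ => z) - p (n + 1) (fun _ => projKerAlong l e z) := by
  set π := projKerAlong l e with hπ
  have telescope := (p (n + 1)).toMultilinearMap.map_piecewise_sub_map_piecewise
    (fun _ => z) (fun _ => π z) 0 Finset.univ
  simp only [Finset.piecewise_univ, Finset.mem_univ, if_true,
    ContinuousMultilinearMap.coe_coe] at telescope
  rw [telescope, divSeries, sum_apply, Finset.smul_sum]
  refine Finset.sum_congr rfl fun k _ => ?_
  rw [ContinuousMultilinearMap.compContinuousLinearMap_apply, ← smul_apply,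
    ← map_smul, ContinuousMultilinearMap.curryMid_apply]
  congr 1
  refine Fin.insertNth_eq_iff.2 ⟨by simp [hπ, projKerAlong_apply], funext fun i => ?_⟩
  simp only [Fin.removeNth, Fin.succAbove_ne, if_false]
  split_ifs <;> rfl

theorem norm_divSeries_le (l : E →L[𝕜] 𝕜) (e : E) (p : FormalMultilinearSeries 𝕜 E G) (n : ℕ) :
    ‖divSeries l e p n‖ ≤
      (n + 1) * (‖p (n + 1)‖ * ‖e‖ * max 1 ‖projKerAlong l e‖ ^ n) := by
  set c := max 1 ‖projKerAlong l e‖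
  have factor_le (k : Fin (n + 1)) (i : Fin n) :
      ‖(if k.succAbove i < k then .id 𝕜 E else projKerAlong l e : E →L[𝕜] E)‖ ≤ c := by
    split_ifs
    · exact ContinuousLinearMap.norm_id_le.trans (le_max_left _ _)
    · exact le_max_right _ _
  have summand_le (k : Fin (n + 1)) :
      ‖((p (n + 1)).curryMid k e).compContinuousLinearMap
        fun i => if k.succAbove i < k then .id 𝕜 E else projKerAlong l e‖ ≤
        ‖p (n + 1)‖ * ‖e‖ * c ^ n := by
    refine (ContinuousMultilinearMap.norm_compContinuousLinearMap_le _ _).trans ?_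
    gcongr
    · exact ((p (n + 1)).curryMid k).le_opNorm e |>.trans_eq (by rw [(p (n + 1)).norm_curryMid k])
    · exact (Finset.prod_le_prod (fun _ _ => norm_nonneg _) fun i _ => factor_le k i).trans_eq
        (by simp)
  exact (norm_sum_le_of_le _ fun k _ => summand_le k).trans_eq (by simp)

theorem radius_divSeries_pos (l : E →L[𝕜] 𝕜) (e : E) {p : FormalMultilinearSeries 𝕜 E G}
    (hp : 0 < p.radius) : 0 < (divSeries l e p).radius := by
  obtain ⟨C, r, hC, hr, hpC⟩ := p.le_mul_pow_of_radius_pos hp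
  set c := max 1 ‖projKerAlong l e‖
  have hc : 0 < c := by positivity
  let s : NNReal := ⟨(2 * r * c)⁻¹, by positivity⟩
  have hs : 0 < s := NNReal.coe_pos.1 (show 0 < (2 * r * c)⁻¹ by positivity)
  refine (ENNReal.coe_pos.2 hs).trans_le
    (FormalMultilinearSeries.le_radius_of_bound _ (C * r * ‖e‖) fun n => ?_)
  have two_pow : (n : ℝ) + 1 ≤ 2 ^ n := by exact_mod_cast n.lt_two_pow_self
  calc ‖divSeries l e p n‖ * (2 * r * c)⁻¹ ^ n
      ≤ 2 ^ n * (C * r ^ (n + 1) * ‖e‖ * c ^ n) * (2 * r * c)⁻¹ ^ n := by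
        grw [norm_divSeries_le, two_pow, hpC]
    _ = C * r * ‖e‖ := by
        rw [inv_pow, mul_pow, mul_pow, pow_succ]
        field_simp

variable [CompleteSpace G]

theorem exists_analyticAt_eventuallyEq_smul {l : E →L[𝕜] 𝕜} {e : E} (he : l e = 1)
    {F : E → G} {x : E} (hx : l x = 0) (hF : AnalyticAt 𝕜 F x)
    (hF0 : ∀ᶠ y in 𝓝 x, l y = 0 → F y = 0) :
    ∃ C : E → G, AnalyticAt 𝕜 C x ∧ F =ᶠ[𝓝 x] fun y => l y • C y := by
  obtain ⟨p, hp⟩ := hF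
  have hq := ((divSeries l e p).hasFPowerSeriesOnBall
    (radius_divSeries_pos l e hp.radius_pos)).comp_sub x
  rw [zero_add] at hq
  refine ⟨_, hq.analyticAt, ?_⟩
  have tendsto_proj : Tendsto (fun y => x + projKerAlong l e (y - x)) (𝓝 x) (𝓝 x) :=
    Continuous.tendsto' (by fun_prop) _ _ (by simp)
  filter_upwards [hp.eventually_hasSum_sub, tendsto_proj.eventually hp.eventually_hasSum_sub,
    tendsto_proj.eventually hF0, hq.eventually_hasSum_sub] with y hFy hFπ hπ0 hCy
  rw [hπ0 (by simp [hx, apply_projKerAlong he])] at hFπ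
  have hdiff := (hasSum_nat_add_iff' 1).2 (hFy.sub hFπ)
  simp only [add_sub_cancel_left, ← smul_divSeries_apply, Finset.range_one,
    Finset.sum_singleton, sub_self, sub_zero,
    Subsingleton.elim (fun _ : Fin 0 => y - x) fun _ => projKerAlong l e (y - x)] at hdiff
  rw [hdiff.unique (hCy.const_smul _), map_sub, hx, sub_zero]

theorem exists_analyticOnNhd_eq_smul_of_eq_zero {l : E →L[𝕜] 𝕜} (hl : l ≠ 0) {U : Set E}
    {F : E → G} (hU : IsOpen U) (hF : AnalyticOnNhd 𝕜 F U) (hF0 : ∀ x ∈ U, l x = 0 → F x = 0) :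
    ∃ C : E → G, AnalyticOnNhd 𝕜 C U ∧ ∀ x ∈ U, F x = l x • C x := by
  obtain ⟨e, he⟩ : ∃ e, l e = 1 := by
    obtain ⟨w, hw⟩ := DFunLike.ne_iff.1 hl
    exact ⟨(l w)⁻¹ • w, by simpa using inv_mul_cancel₀ hw⟩
  classical
  -- Where `l` vanishes, differentiating `F = l • C` along `e` forces the value of `C`.
  let C : E → G := fun x => if l x = 0 then fderiv 𝕜 F x e else (l x)⁻¹ • F x
  have hC {x : E} (hx : x ∈ U) : F x = l x • C x := by
    by_cases hlx : l x = 0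
    · simp [hlx, hF0 x hx hlx]
    · simp [C, hlx]
  refine ⟨C, fun x hx => ?_, fun x => hC⟩
  by_cases hlx : l x = 0
  · obtain ⟨D, hD, hFD⟩ := exists_analyticAt_eventuallyEq_smul he hlx (hF x hx)
      ((hU.eventually_mem hx).mono hF0)
    refine hD.congr ?_
    filter_upwards [hFD.eventuallyEq_nhds, hD.eventually_analyticAt] with y hFDy hDy
    by_cases hly : l y = 0
    · have h := l.hasFDerivAt.smul hDy.differentiableAt.hasFDerivAt
      simp [C, hly, (h.congr_of_eventuallyEq hFDy).fderiv, he]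
    · simp [C, hly, hFDy.self_of_nhds]
  · refine (((l.analyticAt x).inv hlx).smul (hF x hx)).congr ?_
    filter_upwards [l.continuous.continuousAt.eventually_ne hlx] with y hly
    simp [C, hly]

end Division

section Hyperplane

variable {𝕜 E : Type*} [NontriviallyNormedField 𝕜] [NormedAddCommGroup E] [NormedSpace 𝕜 E]

theorem eventually_apply_add_smul_ne_zero {l : E →L[𝕜] 𝕜} {w : E} (hw : l w ≠ 0) (x : E) :
    ∀ᶠ t in 𝓝[≠] (0 : 𝕜), l (x + t • w) ≠ 0 := by
  have finite_zeros : {t : 𝕜 | l (x + t • w) = 0}.Finite := by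
    refine (Set.finite_singleton (-l x / l w)).subset fun t ht => ?_
    rw [Set.mem_singleton_iff, eq_div_iff hw]
    simpa [eq_neg_iff_add_eq_zero, add_comm] using ht
  exact nhdsNE_le_cofinite 0 finite_zeros.compl_mem_cofinite

theorem frequently_apply_ne_zero_of_mem_ker {l m : E →L[𝕜] 𝕜} {w : E} (hlw : l w = 0)
    (hmw : m w ≠ 0) {x : E} (hx : l x = 0) : ∃ᶠ y in 𝓝[{y | l y = 0}] x, m y ≠ 0 := by
  have line_tendsto : Tendsto (fun t : 𝕜 => x + t • w) (𝓝[≠] 0) (𝓝[{y | l y = 0}] x) :=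
    tendsto_nhdsWithin_iff.2
      ⟨(Continuous.tendsto' (by fun_prop) _ _ (by simp)).mono_left nhdsWithin_le_nhds,
        .of_forall fun t => by simp [hlw, hx]⟩
  exact line_tendsto.frequently (eventually_apply_add_smul_ne_zero hmw x).frequently

theorem frequently_apply_ne_zero {l : E →L[𝕜] 𝕜} (hl : l ≠ 0) (x : E) :
    ∃ᶠ y in 𝓝 x, l y ≠ 0 := by
  obtain ⟨w, hw⟩ := DFunLike.ne_iff.1 hl
  simpa using frequently_apply_ne_zero_of_mem_ker (l := 0) rfl hw rfl

end Hyperplane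

section Divergence

variable {𝕜 E : Type*} [NontriviallyNormedField 𝕜] [NormedAddCommGroup E] [NormedSpace 𝕜 E]

variable (𝕜) in
/-- The divergence of a vector field on a finite-dimensional space, defined as the trace of its
derivative so that no basis has to be chosen; it is `0` where the field is not differentiable. -/
noncomputable def divergence (V : E → E) (x : E) : 𝕜 :=
  LinearMap.trace 𝕜 E (fderiv 𝕜 V x)

theorem divergence_smul [FiniteDimensional 𝕜 E] {u : E → 𝕜} {V : E → E} {x : E}
    (hu : DifferentiableAt 𝕜 u x) (hV : DifferentiableAt 𝕜 V x) :
    divergence 𝕜 (fun y => u y • V y) x = u x * divergence 𝕜 V x + fderiv 𝕜 u x (V x) := by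
  simp [divergence, fderiv_fun_smul hu hV]

theorem divergence_prodMk {A B : 𝕜 × 𝕜 → 𝕜} {p : 𝕜 × 𝕜}
    (hA : DifferentiableAt 𝕜 A p) (hB : DifferentiableAt 𝕜 B p) :
    divergence 𝕜 (fun q => (A q, B q)) p = fderiv 𝕜 A p (1, 0) + fderiv 𝕜 B p (0, 1) := by
  rw [divergence, hA.fderiv_prodMk hB,
    LinearMap.trace_eq_matrix_trace 𝕜 (Module.Basis.finTwoProd 𝕜)]
  simp [Matrix.trace, LinearMap.toMatrix_apply]

theorem continuousAt_divergence [CompleteSpace 𝕜] [FiniteDimensional 𝕜 E] {V : E → E} {x : E}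
    (hV : ContDiffAt 𝕜 1 V x) : ContinuousAt (divergence 𝕜 V) x := by
  have trace_cont : Continuous fun T : E →L[𝕜] E => LinearMap.trace 𝕜 E T :=
    (LinearMap.trace 𝕜 E ∘ₗ ContinuousLinearMap.coeLM 𝕜).continuous_of_finiteDimensional
  exact trace_cont.continuousAt.comp (hV.continuousAt_fderiv one_ne_zero)

end Divergence

section Tangency

variable {𝕜 E : Type*} [NontriviallyNormedField 𝕜] [CompleteSpace 𝕜] [CharZero 𝕜]
  [NormedAddCommGroup E] [NormedSpace 𝕜 E] [FiniteDimensional 𝕜 E]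
  {l : E →L[𝕜] 𝕜} {V : E → E} {x : E}

theorem apply_eq_zero_of_divergence_pow_smul_isLittleO (hl : l ≠ 0) (hx : l x = 0)
    (hV : ContDiffAt 𝕜 1 V x) {n : ℕ}
    (hdiv : divergence 𝕜 (fun y => l y ^ (n + 1) • V y) =o[𝓝 x] fun y => l y ^ n) :
    l (V x) = 0 := by
  set S : E → 𝕜 := fun y => (n + 1) * l (V y) + l y * divergence 𝕜 V y
  have div_eq : divergence 𝕜 (fun y => l y ^ (n + 1) • V y) =ᶠ[𝓝 x] fun y => l y ^ n * S y := by
    filter_upwards [hV.eventually (by simp)] with y hy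
    rw [divergence_smul (by fun_prop) (hy.differentiableAt one_ne_zero),
      (l.hasFDerivAt.pow (n + 1)).fderiv]
    simp only [S, Nat.cast_add, Nat.cast_one, add_tsub_cancel_right, smul_apply, smul_eq_mul,
      nsmul_eq_mul]
    ring
  have S_tendsto : Tendsto S (𝓝 x) (𝓝 (S x)) := by
    have := continuousAt_divergence hV
    have := hV.continuousAt
    exact ContinuousAt.tendsto (by fun_prop)
  have quotient_tendsto : Tendsto (fun y => l y ^ n * S y / l y ^ n) (𝓝 x) (𝓝 0) :=
    (hdiv.congr' div_eq .rfl).tendsto_div_nhds_zero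
  have : (𝓝[{y : E | l y ≠ 0}] x).NeBot := frequently_iff_neBot.1 (frequently_apply_ne_zero hl x)
  have quotient_eq : ∀ᶠ y in 𝓝[{y | l y ≠ 0}] x, l y ^ n * S y / l y ^ n = S y :=
    eventually_mem_nhdsWithin.mono fun y hy => mul_div_cancel_left₀ _ (pow_ne_zero n hy)
  have S_x : S x = 0 := tendsto_nhds_unique (S_tendsto.mono_left nhdsWithin_le_nhds)
    ((quotient_tendsto.mono_left nhdsWithin_le_nhds).congr' quotient_eq)
  simpa [S, hx, Nat.cast_add_one_ne_zero n] using S_x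

theorem apply_eq_zero_of_divergence_smul_isBigO (hl : l ≠ 0) (hx : l x = 0) {u : E → 𝕜}
    (hu : ContDiffAt 𝕜 1 u x) (hux : u x ≠ 0) (hV : ContDiffAt 𝕜 1 V x) {n : ℕ} (hn : n ≠ 0)
    (hdiv : divergence 𝕜 (fun y => (l y ^ n * u y) • V y) =O[𝓝 x] fun y => l y ^ n * u y) :
    l (V x) = 0 := by
  obtain ⟨k, rfl⟩ := Nat.exists_eq_succ_of_ne_zero hn
  have mul_isLittleO_one : (fun y => l y * u y) =o[𝓝 x] fun _ => (1 : 𝕜) := by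
    have := hu.continuousAt
    have mul_continuousAt : ContinuousAt (fun y => l y * u y) x := by fun_prop
    exact (isLittleO_one_iff 𝕜).2 (by simpa [hx] using mul_continuousAt.tendsto)
  have div_isLittleO : divergence 𝕜 (fun y => l y ^ (k + 1) • u y • V y) =o[𝓝 x]
      fun y => l y ^ k := by
    simp only [smul_smul]
    refine hdiv.trans_isLittleO ?_
    simpa [pow_succ, mul_assoc] using
      (isBigO_refl (fun y => l y ^ k) (𝓝 x)).mul_isLittleO mul_isLittleO_one
  have := apply_eq_zero_of_divergence_pow_smul_isLittleO hl hx (hu.smul hV) div_isLittleO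
  simpa [hux] using this

theorem exists_apply_eq_mul_of_divergence_smul_isBigO (hl : l ≠ 0) {U : Set E} (hU : IsOpen U)
    {u : E → 𝕜} (hu : AnalyticOnNhd 𝕜 u U)
    (hul : ∀ x ∈ U, l x = 0 → ∃ᶠ y in 𝓝[{y | l y = 0}] x, u y ≠ 0)
    (hV : AnalyticOnNhd 𝕜 V U) {n : ℕ} (hn : n ≠ 0)
    (hdiv : ∀ x ∈ U,
      divergence 𝕜 (fun y => (l y ^ n * u y) • V y) =O[𝓝 x] fun y => l y ^ n * u y) :
    ∃ C : E → 𝕜, AnalyticOnNhd 𝕜 C U ∧ ∀ x ∈ U, l (V x) = l x * C x := by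
  have := FiniteDimensional.complete 𝕜 E
  have hlV : AnalyticOnNhd 𝕜 (fun x => l (V x)) U := fun x hx => (l.analyticAt _).comp (hV x hx)
  refine exists_analyticOnNhd_eq_smul_of_eq_zero hl hU hlV fun x hx hlx => ?_
  by_contra hne
  obtain ⟨y, huy, hly, hyU, hlVy⟩ := ((hul x hx hlx).and_eventually <|
    eventually_mem_nhdsWithin.and <| eventually_nhdsWithin_of_eventually_nhds <|
      (hU.eventually_mem hx).and ((hlV x hx).continuousAt.eventually_ne hne)).exists
  exact hlVy <| apply_eq_zero_of_divergence_smul_isBigO hl hly (hu y hyU).contDiffAt huy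
    (hV y hyU).contDiffAt hn (hdiv y hyU)

end Tangency

theorem mul_add_mul_isBigO_of_continuousAt {X 𝕜 : Type*} [TopologicalSpace X] [NormedField 𝕜]
    {f g a b : X → 𝕜} {x : X} (hf : ContinuousAt f x) (hg : ContinuousAt g x)
    (ha : ContinuousAt a x) (hb : ContinuousAt b x) (m : X → 𝕜) :
    (fun y => f y * (m y * a y) + g y * (m y * b y)) =O[𝓝 x] m := by
  have factor_isBigO : (fun y => f y * a y + g y * b y) =O[𝓝 x] fun _ => (1 : 𝕜) :=
    ((hf.mul ha).add (hg.mul hb)).tendsto.isBigO_one 𝕜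
  exact ((isBigO_refl m (𝓝 x)).mul factor_isBigO).congr (fun y => by ring) fun y => mul_one _

theorem stmt5_general {𝕜 : Type*} [NontriviallyNormedField 𝕜] [CompleteSpace 𝕜] [CharZero 𝕜]
    {U : Set (𝕜 × 𝕜)} (hU : IsOpen U) {α β : ℕ} {A B Atil Btil : 𝕜 × 𝕜 → 𝕜}
    (hAtil : AnalyticOnNhd 𝕜 Atil U) (hBtil : AnalyticOnNhd 𝕜 Btil U)
    (hA : ∀ p ∈ U, A p = p.1 ^ α * p.2 ^ β * Atil p)
    (hB : ∀ p ∈ U, B p = p.1 ^ α * p.2 ^ β * Btil p)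
    (hdiv : ∀ p ∈ U, (fun q => fderiv 𝕜 A q (1, 0) + fderiv 𝕜 B q (0, 1)) =O[𝓝 p]
      fun q => q.1 ^ α * q.2 ^ β) :
    (α ≠ 0 → ∃ C, AnalyticOnNhd 𝕜 C U ∧ ∀ p ∈ U, Atil p = p.1 * C p) ∧
    (β ≠ 0 → ∃ C, AnalyticOnNhd 𝕜 C U ∧ ∀ p ∈ U, Btil p = p.2 * C p) := by
  have hV : AnalyticOnNhd 𝕜 (fun q => (Atil q, Btil q)) U := hAtil.prod hBtil
  have div_isBigO : ∀ p ∈ U,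
      divergence 𝕜 (fun q => (q.1 ^ α * q.2 ^ β) • (Atil q, Btil q)) =O[𝓝 p]
        fun q => q.1 ^ α * q.2 ^ β := fun p hp => by
    refine (hdiv p hp).congr' ?_ .rfl
    filter_upwards [hU.eventually_mem hp] with q hq
    have hAq := (hAtil q hq).differentiableAt
    have hBq := (hBtil q hq).differentiableAt
    rw [(eventuallyEq_of_mem (hU.mem_nhds hq) hA).fderiv_eq,
      (eventuallyEq_of_mem (hU.mem_nhds hq) hB).fderiv_eq]
    exact (divergence_prodMk (by fun_prop) (by fun_prop)).symm
  refine ⟨fun hα => ?_, fun hβ => ?_⟩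
  · exact exists_apply_eq_mul_of_divergence_smul_isBigO (l := .fst 𝕜 𝕜 𝕜)
      (DFunLike.ne_iff.2 ⟨(1, 0), by simp⟩) hU (fun _ _ => analyticAt_snd.pow β)
      (fun p _ hp => (frequently_apply_ne_zero_of_mem_ker (m := .snd 𝕜 𝕜 𝕜) (w := (0, 1))
        (by simp) (by simp) hp).mono fun _ => pow_ne_zero β) hV hα div_isBigO
  · exact exists_apply_eq_mul_of_divergence_smul_isBigO (l := .snd 𝕜 𝕜 𝕜) (u := fun q => q.1 ^ α)
      (DFunLike.ne_iff.2 ⟨(0, 1), by simp⟩) hU (fun _ _ => analyticAt_fst.pow α)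
      (fun p _ hp => (frequently_apply_ne_zero_of_mem_ker (m := .fst 𝕜 𝕜 𝕜) (w := (1, 0))
        (by simp) (by simp) hp).mono fun _ => pow_ne_zero α) hV hβ
      (by simpa only [ContinuousLinearMap.coe_snd', mul_comm] using div_isBigO)

/-- Tangency of the reduced vector field to the exceptional divisor: if
`Z = A ∂ₓ + B ∂_y` is analytic near the origin of `ℝ²` with
`A = x^α y^β · Ã`, `B = x^α y^β · B̃` (`Ã, B̃` analytic) and the divergence
identity `∂ₓA + ∂_yB = f·A + g·B` holds for continuous `f, g`, then if `α ≠ 0`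
the function `x` divides `Ã` (i.e. `Ã = x·C` with `C` analytic), and if `β ≠ 0`
then `y` divides `B̃`; in particular the vector field `(Ã, B̃)` is tangent to
`{x^α y^β = 0}`. -/
theorem stmt5 (U : Set (ℝ × ℝ)) (hU : IsOpen U) (h0 : (0 : ℝ × ℝ) ∈ U)
    (α β : ℕ) (A B Atil Btil f g : ℝ × ℝ → ℝ)
    (hAtil : AnalyticOnNhd ℝ Atil U) (hBtil : AnalyticOnNhd ℝ Btil U)
    (hAdef : ∀ p : ℝ × ℝ, A p = p.1 ^ α * p.2 ^ β * Atil p)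
    (hBdef : ∀ p : ℝ × ℝ, B p = p.1 ^ α * p.2 ^ β * Btil p)
    (hf : ContinuousOn f U) (hg : ContinuousOn g U)
    (hdiv : ∀ p ∈ U, fderiv ℝ A p (1, 0) + fderiv ℝ B p (0, 1) = f p * A p + g p * B p) :
    (α ≠ 0 → ∃ V ⊆ U, IsOpen V ∧ (0 : ℝ × ℝ) ∈ V ∧ ∃ C : ℝ × ℝ → ℝ,
      AnalyticOnNhd ℝ C V ∧ ∀ p ∈ V, Atil p = p.1 * C p) ∧
    (β ≠ 0 → ∃ V ⊆ U, IsOpen V ∧ (0 : ℝ × ℝ) ∈ V ∧ ∃ C : ℝ × ℝ → ℝ,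
      AnalyticOnNhd ℝ C V ∧ ∀ p ∈ V, Btil p = p.2 * C p) := by
  have div_isBigO : ∀ p ∈ U, (fun q => fderiv ℝ A q (1, 0) + fderiv ℝ B q (0, 1)) =O[𝓝 p]
      fun q => q.1 ^ α * q.2 ^ β := fun p hp => by
    refine (mul_add_mul_isBigO_of_continuousAt (hf.continuousAt (hU.mem_nhds hp))
      (hg.continuousAt (hU.mem_nhds hp)) (hAtil p hp).continuousAt (hBtil p hp).continuousAt
      fun q => q.1 ^ α * q.2 ^ β).congr' ?_ .rfl
    filter_upwards [hU.eventually_mem hp] with q hq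
    rw [hdiv q hq, hAdef, hBdef]
  have ⟨hx, hy⟩ :=
    stmt5_general hU hAtil hBtil (fun p _ => hAdef p) (fun p _ => hBdef p) div_isBigO
  exact ⟨fun hα => ⟨U, subset_rfl, hU, h0, hx hα⟩, fun hβ => ⟨U, subset_rfl, hU, h0, hy hβ⟩⟩
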